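/- Conic reformulation of logistic loss minimization: the infimum of L(x) over x ∈ ℝ^n equals the infimum of (1/m) Σ_{i=1}^m s_i over all x ∈ ℝ^n and s, u, v ∈ ℝ^m satisfying, for every i = 1,…,m, u_i ≥ exp(−y_i (A x)_i − s_i), v_i ≥ exp(−s_i), and u_i + v_i ≤ 1. -/

import Mathlib

/-- The logistic loss `L(x) = (1/m) ∑ᵢ log (1 + exp (-yᵢ (A x)ᵢ))`. -/
noncomputable def logLoss (m n : ℕ) (A : Fin m → Fin n → ℝ) (y : Fin m → ℝ)
    (x : Fin n → ℝ) : ℝ :=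
  (1 / (m : ℝ)) * ∑ i, Real.log (1 + Real.exp (-(y i) * ∑ j, A i j * x j))

/-!
Dividing `1 + exp z ≤ exp s` by `exp s` turns `log (1 + exp z) ≤ s` into
`exp (z - s) + exp (-s) ≤ 1`, and `u`, `v` merely split this sum into two exponential cone
constraints. Eliminating them leaves the epigraph form of the problem, which has the same greatest
lower bound because the objective is monotone in `s`.
-/

theorem log_one_add_exp_le_iff {z s : ℝ} :
    Real.log (1 + Real.exp z) ≤ s ↔ Real.exp (z - s) + Real.exp (-s) ≤ 1 := by
  have sum_eq : Real.exp (z - s) + Real.exp (-s) = (1 + Real.exp z) / Real.exp s := by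
    rw [Real.exp_sub, Real.exp_neg]
    ring
  rw [sum_eq, div_le_one (Real.exp_pos s), Real.log_le_iff_le_exp (by positivity)]

theorem log_one_add_exp_nonneg (z : ℝ) : 0 ≤ Real.log (1 + Real.exp z) :=
  Real.log_nonneg (le_add_of_nonneg_right (Real.exp_nonneg z))

theorem exists_exp_le_and_add_le_one_iff {ι : Type*} {z s : ι → ℝ} :
    (∃ u v : ι → ℝ, (∀ i, Real.exp (z i - s i) ≤ u i) ∧ (∀ i, Real.exp (-(s i)) ≤ v i) ∧
      ∀ i, u i + v i ≤ 1) ↔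
    ∀ i, Real.log (1 + Real.exp (z i)) ≤ s i := by
  simp only [log_one_add_exp_le_iff]
  constructor
  · rintro ⟨u, v, hu, hv, huv⟩ i
    exact (add_le_add (hu i) (hv i)).trans (huv i)
  · intro h
    exact ⟨fun i => Real.exp (z i - s i), fun i => Real.exp (-(s i)),
      fun _ => le_rfl, fun _ => le_rfl, h⟩

theorem lowerBounds_epigraph_eq {X α β : Type*} [Preorder α] [Preorder β] {Φ : α → β}
    (hΦ : Monotone Φ) (f : X → α) :
    lowerBounds {w | ∃ x s, f x ≤ s ∧ w = Φ s} = lowerBounds {w | ∃ x, w = Φ (f x)} := by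
  ext b
  constructor
  · rintro hb _ ⟨x, rfl⟩
    exact hb ⟨x, f x, le_rfl, rfl⟩
  · rintro hb _ ⟨x, s, hs, rfl⟩
    exact (hb ⟨x, rfl⟩).trans (hΦ hs)

theorem monotone_mul_sum {ι : Type*} [Fintype ι] {c : ℝ} (hc : 0 ≤ c) :
    Monotone fun s : ι → ℝ => c * ∑ i, s i :=
  fun _ _ hst => mul_le_mul_of_nonneg_left (Finset.sum_le_sum fun i _ => hst i) hc

theorem logLoss_conic_reformulation_general {X ι : Type*} [Nonempty X] {Φ : (ι → ℝ) → ℝ}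
    (hΦ : Monotone Φ) (z : X → ι → ℝ) :
    IsGLB {w : ℝ | ∃ (x : X) (s u v : ι → ℝ),
      (∀ i, Real.exp (z x i - s i) ≤ u i) ∧
      (∀ i, Real.exp (-(s i)) ≤ v i) ∧
      (∀ i, u i + v i ≤ 1) ∧
      w = Φ s}
    (sInf {w : ℝ | ∃ x : X, w = Φ fun i => Real.log (1 + Real.exp (z x i))}) := by
  let f : X → ι → ℝ := fun x i => Real.log (1 + Real.exp (z x i))
  have conic_eq_epigraph : {w : ℝ | ∃ (x : X) (s u v : ι → ℝ),
      (∀ i, Real.exp (z x i - s i) ≤ u i) ∧ (∀ i, Real.exp (-(s i)) ≤ v i) ∧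
      (∀ i, u i + v i ≤ 1) ∧ w = Φ s} = {w | ∃ x s, f x ≤ s ∧ w = Φ s} := by
    simp only [f, Pi.le_def, ← exists_exp_le_and_add_le_one_iff, ← exists_and_right, and_assoc]
  have isGLB_loss : IsGLB {w | ∃ x, w = Φ (f x)} (sInf {w | ∃ x, w = Φ (f x)}) := by
    refine isGLB_csInf ⟨_, Classical.arbitrary X, rfl⟩ ⟨Φ 0, ?_⟩
    rintro _ ⟨x, rfl⟩
    exact hΦ fun i => log_one_add_exp_nonneg (z x i)
  rw [conic_eq_epigraph, IsGLB, lowerBounds_epigraph_eq hΦ f]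
  exact isGLB_loss

/-- Conic reformulation of logistic loss minimization: the infimum of `L(x)` over
`x ∈ ℝ^n` equals the infimum of `(1/m) ∑ᵢ sᵢ` over all `x ∈ ℝ^n` and `s, u, v ∈ ℝ^m`
satisfying `uᵢ ≥ exp (-yᵢ (A x)ᵢ - sᵢ)`, `vᵢ ≥ exp (-sᵢ)`, and `uᵢ + vᵢ ≤ 1`. -/
theorem logLoss_conic_reformulation (m n : ℕ) (hm : 0 < m) (hn : 0 < n)
    (A : Fin m → Fin n → ℝ) (y : Fin m → ℝ) (hy : ∀ i, y i = 1 ∨ y i = -1) :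
    sInf {w : ℝ | ∃ x : Fin n → ℝ, w = logLoss m n A y x} =
    sInf {w : ℝ | ∃ (x : Fin n → ℝ) (s u v : Fin m → ℝ),
      (∀ i, Real.exp (-(y i) * (∑ j, A i j * x j) - s i) ≤ u i) ∧
      (∀ i, Real.exp (-(s i)) ≤ v i) ∧
      (∀ i, u i + v i ≤ 1) ∧
      w = (1 / (m : ℝ)) * ∑ i, s i} := by
  have conic_isGLB := logLoss_conic_reformulation_general
    (monotone_mul_sum (one_div_nonneg.2 m.cast_nonneg))
    fun (x : Fin n → ℝ) i => -(y i) * ∑ j, A i j * x j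
  exact (conic_isGLB.csInf_eq conic_isGLB.nonempty).symm
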